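/- Let ρ be a density matrix on a nonempty finite type ι with entropy E and spectral constants α and β as in the context, and assume α > 0. Then there exist constants ε₀ > 0, α' > 0 and n₀ ∈ ℕ such that: for every n ≥ n₀, every nonempty finite type κ, every density matrix Γ on κ, every positive integer d, every real t > 0, and every density matrix X on the index type (Fin n → ι) × κ satisfying (i) rank X ≤ d, (ii) ‖X‖ ≤ t/d where ‖X‖ is the largest singular value (operator norm) of X, and (iii) D(ρ^{⊗n} ⊗ Γ, X) ≤ 2ε₀, one has t ≥ 2^{α'·√n}. -/

import Mathlib

open scoped BigOperators Classical ComplexOrder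

/-- A density matrix: positive semidefinite with trace one. -/
def IsDensity {ι : Type*} [Fintype ι] [DecidableEq ι] (ρ : Matrix ι ι ℂ) : Prop :=
  ρ.PosSemidef ∧ ρ.trace = 1

/-- The trace distance `D(ρ,σ) = Tr|ρ−σ|`: the sum of the absolute values of the
eigenvalues of the Hermitian matrix `ρ − σ` (no factor 1/2). -/
noncomputable def traceDist {ι : Type*} [Fintype ι] [DecidableEq ι]
    (ρ σ : Matrix ι ι ℂ) : ℝ :=
  if h : (ρ - σ).IsHermitian then ∑ i, |h.eigenvalues i| else 0

/-- The minimal dimension `𝒮(ρ,δ)` of a `δ`-significant subspace: the minimum rank of an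
orthogonal projection `P` (`P = Pᴴ = P²`) with `Tr(Pρ) ≥ δ`. -/
noncomputable def sigDim {ι : Type*} [Fintype ι] [DecidableEq ι]
    (ρ : Matrix ι ι ℂ) (δ : ℝ) : ℕ :=
  sInf {m : ℕ | ∃ P : Matrix ι ι ℂ,
    P.IsHermitian ∧ P * P = P ∧ δ ≤ ((P * ρ).trace).re ∧ P.rank = m}

/-- The `n`-fold Kronecker power of `ρ`, indexed by `Fin n → ι`. -/
noncomputable def kronPow {ι : Type*} (ρ : Matrix ι ι ℂ) (n : ℕ) :
    Matrix (Fin n → ι) (Fin n → ι) ℂ :=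
  Matrix.of fun i j => ∏ k, ρ (i k) (j k)

/-- The rank-one matrix `|u⟩⟨u|`. -/
noncomputable def outer {ι : Type*} (u : ι → ℂ) : Matrix ι ι ℂ :=
  Matrix.of fun i j => u i * starRingEnd ℂ (u j)

/-- The partial trace over the second subsystem. -/
noncomputable def ptraceB {A B : Type*} [Fintype B]
    (M : Matrix (A × B) (A × B) ℂ) : Matrix A A ℂ :=
  Matrix.of fun a a' => ∑ b, M (a, b) (a', b)

/-- The operator norm (largest singular value) of a matrix: the supremum of `‖Xv‖` over unit
vectors `v`. -/
noncomputable def opNorm {ι : Type*} [Fintype ι] (X : Matrix ι ι ℂ) : ℝ :=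
  sSup {r : ℝ | ∃ v : ι → ℂ,
    (∑ i, ‖v i‖ ^ 2 = 1) ∧ r = Real.sqrt (∑ i, ‖X.mulVec v i‖ ^ 2)}

/-! A state `X` of rank at most `d` and norm at most `t / d` is almost flat, and so is every state
`σ` close to it: testing with the support projection of `X`, the eigenvalues of `σ` below `ε / d`
carry little mass; testing with the spectral projection of `σ` above `t / (d * ε)`, whose rank is
at most `d * ε / t`, so do those above it. Hence the spectrum of `σ` is nearly concentrated in a
window of ratio `t / ε ^ 2`.

The spectrum of `ρ^{⊗n}` is not so concentrated. The logarithm of a random eigenvalue is a sum of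
`n` independent terms of variance `α ^ 2`, and the Paley–Zygmund inequality applied to its squared
distance from any point shows that it avoids each interval of length `α * √n` with probability
bounded below. Tensoring with `Γ` only rescales the window, once for each eigenvalue of `Γ`.
Therefore `2 ^ (α * √n) < t / ε ^ 2`. -/

section Spectral

open scoped MatrixOrder

theorem trace_mul_le_trace_mul {N 𝕜 : Type*} [Fintype N] [RCLike 𝕜] {Q A B : Matrix N N 𝕜}
    (hQ : 0 ≤ Q) (hAB : A ≤ B) : (Q * A).trace ≤ (Q * B).trace := by
  obtain ⟨R, rfl⟩ := CStarAlgebra.nonneg_iff_eq_star_mul_self.mp hQ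
  have hpos : 0 ≤ (R * (B - A) * R.conjTranspose).trace :=
    ((Matrix.le_iff.1 hAB).mul_mul_conjTranspose_same R).trace_nonneg
  rw [← sub_nonneg, ← Matrix.trace_sub, ← Matrix.mul_sub, Matrix.mul_assoc, Matrix.trace_mul_comm]
  exact hpos

variable {N : Type*} [Fintype N]

/-- The mass that the weights `w` give to the atoms whose own weight lies outside `[a, b]`. For
the spectrum of a state it measures how far the state is from being flat, and it vanishes for
`a = b = 1 / d` if the state is maximally mixed of rank `d`. -/
noncomputable def offMass (w : N → ℝ) (a b : ℝ) : ℝ :=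
  ∑ i with w i ∉ Set.Icc a b, w i

/-- The weights `w` give mass at least `η` to the outside of every window `[a, b]` whose ratio
`b / a` is at most `R`: no such window captures almost all of `w`. -/
def IsSpread (w : N → ℝ) (R η : ℝ) : Prop :=
  ∀ ⦃a b : ℝ⦄, 0 < a → b ≤ R * a → η ≤ offMass w a b

theorem opNorm_nonneg (X : Matrix N N ℂ) : 0 ≤ opNorm X :=
  Real.sSup_nonneg <| by
    rintro _ ⟨v, -, rfl⟩
    exact Real.sqrt_nonneg _

theorem sqrt_sum_norm_mulVec_sq_le_opNorm (X : Matrix N N ℂ) {v : N → ℂ}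
    (hv : ∑ i, ‖v i‖ ^ 2 = 1) : Real.sqrt (∑ i, ‖X.mulVec v i‖ ^ 2) ≤ opNorm X := by
  refine le_csSup ⟨‖Matrix.toEuclideanCLM (𝕜 := ℂ) X‖, ?_⟩ ⟨v, hv, rfl⟩
  rintro _ ⟨u, hu, rfl⟩
  have hbound := (Matrix.toEuclideanCLM (𝕜 := ℂ) X).le_opNorm (WithLp.toLp 2 u)
  rw [Matrix.toEuclideanCLM_toLp, EuclideanSpace.norm_eq, EuclideanSpace.norm_eq] at hbound
  simpa [hu] using hbound

variable [DecidableEq N]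

/-- The functional calculus of an orthonormal basis: `spectralHom U a` is the Hermitian matrix
whose eigenvectors are the columns of the unitary `U`, with eigenvalues `a`. Being a ring
homomorphism in `a`, it carries identities between functions to identities between matrices. -/
noncomputable def spectralHom (U : Matrix.unitaryGroup N ℂ) : (N → ℝ) →+* Matrix N N ℂ :=
  (Unitary.conjStarAlgAut ℂ (Matrix N N ℂ) U : Matrix N N ℂ →+* Matrix N N ℂ).comp
    ((Matrix.diagonalRingHom N ℂ).comp (Complex.ofRealHom.compLeft N))

theorem spectralHom_apply (U : Matrix.unitaryGroup N ℂ) (a : N → ℝ) :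
    spectralHom U a = U * Matrix.diagonal (fun i => (a i : ℂ)) * star (U : Matrix N N ℂ) :=
  rfl

theorem spectralHom_eigenvalues {A : Matrix N N ℂ} (hA : A.IsHermitian) :
    spectralHom hA.eigenvectorUnitary hA.eigenvalues = A :=
  hA.spectral_theorem.symm

theorem spectralHom_const (U : Matrix.unitaryGroup N ℂ) (c : ℝ) :
    spectralHom U (fun _ => c) = (c : ℂ) • 1 := by
  rw [spectralHom_apply, ← Matrix.smul_one_eq_diagonal, Matrix.mul_smul, Matrix.smul_mul,
    Matrix.mul_one, Matrix.mem_unitaryGroup_iff.1 U.2]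

theorem trace_spectralHom (U : Matrix.unitaryGroup N ℂ) (a : N → ℝ) :
    (spectralHom U a).trace = ((∑ i, a i : ℝ) : ℂ) := by
  rw [spectralHom_apply, Matrix.trace_mul_cycle, Unitary.coe_star_mul_self, Matrix.one_mul,
    Matrix.trace_diagonal, Complex.ofReal_sum]

theorem spectralHom_nonneg (U : Matrix.unitaryGroup N ℂ) {a : N → ℝ} (ha : 0 ≤ a) :
    0 ≤ spectralHom U a := by
  have hdiag : (Matrix.diagonal fun i => (a i : ℂ)).PosSemidef :=
    Matrix.PosSemidef.diagonal fun i => Complex.zero_le_real.2 (ha i)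
  exact (hdiag.mul_mul_conjTranspose_same (U : Matrix N N ℂ)).nonneg

theorem spectralHom_mono (U : Matrix.unitaryGroup N ℂ) : Monotone (spectralHom U) := by
  intro a b hab
  rw [← sub_nonneg, ← map_sub]
  exact spectralHom_nonneg U (sub_nonneg.2 hab)

theorem isHermitian_spectralHom (U : Matrix.unitaryGroup N ℂ) (a : N → ℝ) :
    (spectralHom U a).IsHermitian :=
  Matrix.isHermitian_mul_mul_conjTranspose _ <|
    (Matrix.isHermitian_diagonal_iff).2 fun i => Complex.conj_ofReal (a i)

theorem abs_re_trace_mul_sub_le_traceDist {Q σ X : Matrix N N ℂ} (hQ₀ : 0 ≤ Q) (hQ₁ : Q ≤ 1)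
    (hσX : (σ - X).IsHermitian) : |(Q * σ).trace.re - (Q * X).trace.re| ≤ traceDist σ X := by
  set U := hσX.eigenvectorUnitary
  set lam := hσX.eigenvalues
  have hle_abs : ∀ a : N → ℝ, a ≤ |lam| → (Q * spectralHom U a).trace.re ≤ traceDist σ X := by
    intro a ha
    calc (Q * spectralHom U a).trace.re
        ≤ (Q * spectralHom U |lam|).trace.re :=
          Complex.re_le_re (trace_mul_le_trace_mul hQ₀ (spectralHom_mono U ha))
      _ = (spectralHom U |lam| * Q).trace.re := by rw [Matrix.trace_mul_comm]
      _ ≤ (spectralHom U |lam| * 1).trace.re := Complex.re_le_re <|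
          trace_mul_le_trace_mul (spectralHom_nonneg U (abs_nonneg lam)) hQ₁
      _ = traceDist σ X := by
          rw [Matrix.mul_one, trace_spectralHom, Complex.ofReal_re, traceDist, dif_pos hσX]
          rfl
  have hupper := hle_abs lam (le_abs_self lam)
  have hlower := hle_abs (-lam) (neg_le_abs lam)
  rw [map_neg, Matrix.mul_neg, Matrix.trace_neg, Complex.neg_re] at hlower
  rw [spectralHom_eigenvalues hσX] at hupper hlower
  rw [← Complex.sub_re, ← Matrix.trace_sub, ← Matrix.mul_sub]
  exact abs_le.2 ⟨by linarith, hupper⟩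

theorem eigenvalues_le_opNorm {X : Matrix N N ℂ} (hX : X.IsHermitian) (j : N) :
    hX.eigenvalues j ≤ opNorm X := by
  have hunit : ∑ i, ‖hX.eigenvectorBasis j i‖ ^ 2 = 1 := by
    rw [← EuclideanSpace.norm_sq_eq, hX.eigenvectorBasis.orthonormal.1 j, one_pow]
  refine le_trans (Real.le_sqrt_of_sq_le (le_of_eq ?_))
    (sqrt_sum_norm_mulVec_sq_le_opNorm X hunit)
  simp [hX.mulVec_eigenvectorBasis, mul_pow, ← Finset.mul_sum, hunit]

theorem le_opNorm_smul_one {X : Matrix N N ℂ} (hX : X.IsHermitian) : X ≤ (opNorm X : ℂ) • 1 := by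
  rw [← spectralHom_const hX.eigenvectorUnitary]
  conv_lhs => rw [← spectralHom_eigenvalues hX]
  exact spectralHom_mono _ (eigenvalues_le_opNorm hX)

theorem exists_support_projection {X : Matrix N N ℂ} (hX : X.IsHermitian) :
    ∃ Q : Matrix N N ℂ, 0 ≤ Q ∧ Q ≤ 1 ∧ Q * X = X ∧ Q.trace = X.rank := by
  set U := hX.eigenvectorUnitary
  set supp : N → ℝ := fun i => if hX.eigenvalues i ≠ 0 then 1 else 0
  refine ⟨spectralHom U supp, spectralHom_nonneg U fun i => ?_, ?_, ?_, ?_⟩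
  · dsimp only [supp, Pi.zero_apply]
    split_ifs <;> norm_num
  · rw [← map_one (spectralHom U)]
    refine spectralHom_mono U fun i => ?_
    dsimp only [supp, Pi.one_apply]
    split_ifs <;> norm_num
  · have hsupp : supp * hX.eigenvalues = hX.eigenvalues := by
      ext i
      by_cases hi : hX.eigenvalues i = 0 <;> simp [supp, hi]
    conv_lhs => rw [← spectralHom_eigenvalues hX, ← map_mul, hsupp]
    exact spectralHom_eigenvalues hX
  · rw [trace_spectralHom, hX.rank_eq_card_non_zero_eigs, Fintype.card_subtype, Finset.sum_boole,
      Complex.ofReal_natCast]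

theorem sum_lt_le_traceDist_add_rank_mul (V : Matrix.unitaryGroup N ℂ) {w : N → ℝ}
    (hw : w ∈ stdSimplex ℝ N) {X : Matrix N N ℂ} (hX : X.IsHermitian) (htr : X.trace = 1)
    {a : ℝ} (ha : 0 ≤ a) :
    ∑ i with w i < a, w i ≤ traceDist (spectralHom V w) X + X.rank * a := by
  obtain ⟨Q, hQ₀, hQ₁, hQX, hQtr⟩ := exists_support_projection hX
  set heavy : N → ℝ := fun i => if w i < a then 0 else w i
  have hheavy : 0 ≤ heavy := fun i => by
    dsimp only [heavy]
    split_ifs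
    exacts [le_rfl, hw.1 i]
  have hw_le : w ≤ heavy + fun _ => a := fun i => by
    dsimp only [heavy, Pi.add_apply]
    split_ifs <;> linarith
  have hsplit : ∑ i with w i < a, w i + ∑ i, heavy i = 1 := by
    rw [← hw.2, Finset.sum_filter, ← Finset.sum_add_distrib]
    refine Finset.sum_congr rfl fun i _ => ?_
    dsimp only [heavy]
    split_ifs <;> ring
  have hQheavy : (Q * spectralHom V heavy).trace.re ≤ ∑ i, heavy i := by
    have := trace_mul_le_trace_mul (spectralHom_nonneg V hheavy) hQ₁
    rw [Matrix.mul_one, trace_spectralHom, Matrix.trace_mul_comm] at this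
    exact Complex.re_le_re this
  have hQσ : (Q * spectralHom V w).trace.re ≤ ∑ i, heavy i + X.rank * a := by
    calc (Q * spectralHom V w).trace.re
        ≤ (Q * spectralHom V (heavy + fun _ => a)).trace.re :=
          Complex.re_le_re (trace_mul_le_trace_mul hQ₀ (spectralHom_mono V hw_le))
      _ = (Q * spectralHom V heavy).trace.re + X.rank * a := by
          simp [spectralHom_const, Matrix.mul_add, hQtr, mul_comm]
      _ ≤ ∑ i, heavy i + X.rank * a := by gcongr
  have hdist := neg_le_of_abs_le
    (abs_re_trace_mul_sub_le_traceDist hQ₀ hQ₁ ((isHermitian_spectralHom V w).sub hX))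
  rw [hQX, htr, Complex.one_re] at hdist
  linarith

theorem sum_gt_le_traceDist_add_opNorm_div (V : Matrix.unitaryGroup N ℂ) {w : N → ℝ}
    (hw : w ∈ stdSimplex ℝ N) {X : Matrix N N ℂ} (hX : X.IsHermitian) {b : ℝ} (hb : 0 < b) :
    ∑ i with b < w i, w i ≤ traceDist (spectralHom V w) X + opNorm X / b := by
  set heavy : N → ℝ := fun i => if b < w i then 1 else 0
  have hheavy₀ : 0 ≤ heavy := fun i => by
    dsimp only [heavy, Pi.zero_apply]
    split_ifs <;> norm_num
  have hheavy₁ : heavy ≤ 1 := fun i => by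
    dsimp only [heavy, Pi.one_apply]
    split_ifs <;> norm_num
  have hQσ : (spectralHom V heavy * spectralHom V w).trace.re = ∑ i with b < w i, w i := by
    simp [← map_mul, trace_spectralHom, heavy, Finset.sum_filter]
  have hcount : ∑ i, heavy i ≤ 1 / b := by
    rw [le_div_iff₀ hb, Finset.sum_mul, ← hw.2]
    refine Finset.sum_le_sum fun i _ => ?_
    dsimp only [heavy]
    split_ifs with hi
    · simpa using hi.le
    · simpa using hw.1 i
  have hQX : (spectralHom V heavy * X).trace.re ≤ opNorm X / b := by
    calc (spectralHom V heavy * X).trace.re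
        ≤ (spectralHom V heavy * (opNorm X : ℂ) • 1).trace.re := Complex.re_le_re <|
          trace_mul_le_trace_mul (spectralHom_nonneg V hheavy₀) (le_opNorm_smul_one hX)
      _ = opNorm X * ∑ i, heavy i := by
          rw [Matrix.mul_smul, Matrix.mul_one, Matrix.trace_smul, trace_spectralHom,
            smul_eq_mul, ← Complex.ofReal_mul, Complex.ofReal_re]
      _ ≤ opNorm X * (1 / b) := mul_le_mul_of_nonneg_left hcount (opNorm_nonneg X)
      _ = opNorm X / b := mul_one_div _ _
  have hdist := le_of_abs_le <| abs_re_trace_mul_sub_le_traceDist (spectralHom_nonneg V hheavy₀)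
    (map_one (spectralHom V) ▸ spectralHom_mono V hheavy₁)
    ((isHermitian_spectralHom V w).sub hX)
  linarith

theorem offMass_le_two_mul_traceDist_add (V : Matrix.unitaryGroup N ℂ) {w : N → ℝ}
    (hw : w ∈ stdSimplex ℝ N) {X : Matrix N N ℂ} (hX : X.IsHermitian) (htr : X.trace = 1)
    {a b : ℝ} (ha : 0 ≤ a) (hb : 0 < b) :
    offMass w a b ≤ 2 * traceDist (spectralHom V w) X + X.rank * a + opNorm X / b := by
  have hsubset : ({i | w i ∉ Set.Icc a b} : Finset N) ⊆
      ({i | w i < a} : Finset N) ∪ ({i | b < w i} : Finset N) := by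
    intro i
    simp only [Finset.mem_filter_univ, Finset.mem_union, Set.mem_Icc, not_and_or, not_le]
    exact id
  calc offMass w a b
      ≤ ∑ i with w i < a, w i + ∑ i with b < w i, w i :=
        (Finset.sum_le_sum_of_subset_of_nonneg hsubset fun i _ _ => hw.1 i).trans <| by
          rw [← Finset.sum_union_inter]
          exact le_add_of_nonneg_right (Finset.sum_nonneg fun i _ => hw.1 i)
    _ ≤ 2 * traceDist (spectralHom V w) X + X.rank * a + opNorm X / b := by
        linarith [sum_lt_le_traceDist_add_rank_mul V hw hX htr ha,
          sum_gt_le_traceDist_add_opNorm_div V hw hX hb]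

theorem IsSpread.lt_of_traceDist_le {w : N → ℝ} {R η ε : ℝ} (hspread : IsSpread w R η)
    (hw : w ∈ stdSimplex ℝ N) (hε : 0 < ε) (hεη : 6 * ε < η) {V : Matrix.unitaryGroup N ℂ}
    {X : Matrix N N ℂ} (hX : X.IsHermitian) (htr : X.trace = 1) {d : ℕ}
    (hd : 0 < d) {t : ℝ} (ht : 0 < t) (hrank : X.rank ≤ d) (hnorm : opNorm X ≤ t / d)
    (hdist : traceDist (spectralHom V w) X ≤ 2 * ε) : R * ε ^ 2 < t := by
  have hd' : (0 : ℝ) < d := Nat.cast_pos.2 hd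
  by_contra! hle
  have hwindow : t / d / ε ≤ R * (ε / d) := by
    rw [div_div, div_le_iff₀ (by positivity)]
    calc t ≤ R * ε ^ 2 := hle
      _ = R * (ε / d) * (d * ε) := by field_simp
  have hmass := offMass_le_two_mul_traceDist_add V hw hX htr (a := ε / d) (b := t / d / ε)
    (by positivity) (by positivity)
  have hrank_mul : X.rank * (ε / d) ≤ ε := by
    calc X.rank * (ε / d) ≤ d * (ε / d) := by gcongr
      _ = ε := mul_div_cancel₀ ε hd'.ne'
  have hnorm_div : opNorm X / (t / d / ε) ≤ ε := by
    rw [div_le_iff₀ (by positivity), mul_div_cancel₀ _ hε.ne']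
    exact hnorm
  linarith [hspread (by positivity) hwindow]

end Spectral

section KroneckerPower

/-- The law of `n` independent samples from the weights `p`: a product weight on `n`-tuples. -/
noncomputable def iidWeight {ι : Type*} (p : ι → ℝ) (n : ℕ) : (Fin n → ι) → ℝ :=
  fun x => ∏ k, p (x k)

theorem kronPow_mul {ι : Type*} [Fintype ι] (A B : Matrix ι ι ℂ) (n : ℕ) :
    kronPow (A * B) n = kronPow A n * kronPow B n := by
  ext i j
  simp only [kronPow, Matrix.of_apply, Matrix.mul_apply, Finset.prod_univ_sum,
    Fintype.piFinset_univ, Finset.prod_mul_distrib]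

theorem kronPow_star {ι : Type*} (A : Matrix ι ι ℂ) (n : ℕ) :
    kronPow (star A) n = star (kronPow A n) := by
  ext i j
  simp [kronPow, Matrix.star_apply]

theorem kronPow_diagonal {ι : Type*} [DecidableEq ι] (a : ι → ℂ) (n : ℕ) :
    kronPow (Matrix.diagonal a) n = Matrix.diagonal fun x => ∏ k, a (x k) := by
  ext i j
  simp only [kronPow, Matrix.of_apply, Matrix.diagonal_apply]
  split_ifs with hij
  · simp [hij]
  · obtain ⟨k, hk⟩ := Function.ne_iff.1 hij
    exact Finset.prod_eq_zero (Finset.mem_univ k) (if_neg hk)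

variable {ι κ : Type*} [Fintype ι] [DecidableEq ι] [Fintype κ] [DecidableEq κ]

theorem kronPow_mem_unitaryGroup {U : Matrix ι ι ℂ} (hU : U ∈ Matrix.unitaryGroup ι ℂ) (n : ℕ) :
    kronPow U n ∈ Matrix.unitaryGroup (Fin n → ι) ℂ := by
  rw [Matrix.mem_unitaryGroup_iff, ← kronPow_star, ← kronPow_mul, Matrix.mem_unitaryGroup_iff.1 hU,
    ← Matrix.diagonal_one, kronPow_diagonal]
  simp

theorem kronPow_spectralHom (U : Matrix.unitaryGroup ι ℂ) (p : ι → ℝ) (n : ℕ) :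
    kronPow (spectralHom U p) n =
      spectralHom ⟨kronPow (U : Matrix ι ι ℂ) n, kronPow_mem_unitaryGroup U.2 n⟩
        (iidWeight p n) := by
  simp only [spectralHom_apply, kronPow_mul, kronPow_star, kronPow_diagonal, iidWeight,
    Complex.ofReal_prod]

theorem kronecker_spectralHom (U : Matrix.unitaryGroup ι ℂ) (V : Matrix.unitaryGroup κ ℂ)
    (p : ι → ℝ) (q : κ → ℝ) :
    Matrix.kroneckerMap (· * ·) (spectralHom U p) (spectralHom V q) =
      spectralHom
        ⟨Matrix.kroneckerMap (· * ·) (U : Matrix ι ι ℂ) (V : Matrix κ κ ℂ),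
          Matrix.kronecker_mem_unitary U.2 V.2⟩
        fun z => p z.1 * q z.2 := by
  simp only [spectralHom_apply, Matrix.star_eq_conjTranspose]
  rw [Matrix.mul_kronecker_mul, Matrix.mul_kronecker_mul, Matrix.diagonal_kronecker_diagonal,
    ← Matrix.conjTranspose_kronecker]
  simp only [Complex.ofReal_mul]

theorem IsDensity.eigenvalues_mem_stdSimplex {ρ : Matrix ι ι ℂ} (hρ : IsDensity ρ) :
    hρ.1.isHermitian.eigenvalues ∈ stdSimplex ℝ ι := by
  refine ⟨hρ.1.eigenvalues_nonneg, ?_⟩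
  have htr := hρ.1.isHermitian.trace_eq_sum_eigenvalues.symm.trans hρ.2
  simpa using congrArg Complex.re htr

end KroneckerPower

section Moments

variable {Ω Ω' R : Type*} [Fintype Ω] [Fintype Ω'] [CommRing R] {W Y : Ω → R} {W' Y' : Ω' → R}

theorem sum_mul_sub_sq (hW : ∑ x, W x = 1) (hY : ∑ x, W x * Y x = 0) (c : R) :
    ∑ x, W x * (Y x - c) ^ 2 = ∑ x, W x * Y x ^ 2 + c ^ 2 := by
  calc ∑ x, W x * (Y x - c) ^ 2
      = ∑ x, W x * Y x ^ 2 - 2 * c * ∑ x, W x * Y x + c ^ 2 * ∑ x, W x := by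
        simp only [Finset.mul_sum, ← Finset.sum_add_distrib, ← Finset.sum_sub_distrib]
        exact Finset.sum_congr rfl fun x _ => by ring
    _ = ∑ x, W x * Y x ^ 2 + c ^ 2 := by
        rw [hW, hY]
        ring

theorem sum_mul_sum_add (hW : ∑ x, W x = 1) (hW' : ∑ y, W' y = 1) :
    ∑ x, ∑ y, W x * W' y * (Y x + Y' y) = ∑ x, W x * Y x + ∑ y, W' y * Y' y := by
  calc ∑ x, ∑ y, W x * W' y * (Y x + Y' y)
      = (∑ x, W x * Y x) * (∑ y, W' y) + (∑ x, W x) * ∑ y, W' y * Y' y := by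
        simp only [Finset.sum_mul_sum, ← Finset.sum_add_distrib]
        exact Finset.sum_congr rfl fun x _ => Finset.sum_congr rfl fun y _ => by ring
    _ = ∑ x, W x * Y x + ∑ y, W' y * Y' y := by rw [hW, hW', mul_one, one_mul]

theorem sum_mul_sum_add_sq (hW : ∑ x, W x = 1) (hW' : ∑ y, W' y = 1)
    (hY : ∑ x, W x * Y x = 0) :
    ∑ x, ∑ y, W x * W' y * (Y x + Y' y) ^ 2 = ∑ x, W x * Y x ^ 2 + ∑ y, W' y * Y' y ^ 2 := by
  calc ∑ x, ∑ y, W x * W' y * (Y x + Y' y) ^ 2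
      = (∑ x, W x * Y x ^ 2) * (∑ y, W' y) + 2 * ((∑ x, W x * Y x) * ∑ y, W' y * Y' y)
          + (∑ x, W x) * ∑ y, W' y * Y' y ^ 2 := by
        simp only [Finset.sum_mul_sum]
        simp only [Finset.mul_sum, ← Finset.sum_add_distrib]
        exact Finset.sum_congr rfl fun x _ => Finset.sum_congr rfl fun y _ => by ring
    _ = ∑ x, W x * Y x ^ 2 + ∑ y, W' y * Y' y ^ 2 := by
        rw [hW, hW', hY]
        ring

theorem sum_mul_sum_add_pow_four (hW : ∑ x, W x = 1) (hW' : ∑ y, W' y = 1)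
    (hY : ∑ x, W x * Y x = 0) (hY' : ∑ y, W' y * Y' y = 0) :
    ∑ x, ∑ y, W x * W' y * (Y x + Y' y) ^ 4 = ∑ x, W x * Y x ^ 4
      + 6 * ((∑ x, W x * Y x ^ 2) * ∑ y, W' y * Y' y ^ 2) + ∑ y, W' y * Y' y ^ 4 := by
  calc ∑ x, ∑ y, W x * W' y * (Y x + Y' y) ^ 4
      = (∑ x, W x * Y x ^ 4) * (∑ y, W' y) + 4 * ((∑ x, W x * Y x ^ 3) * ∑ y, W' y * Y' y)
          + 6 * ((∑ x, W x * Y x ^ 2) * ∑ y, W' y * Y' y ^ 2)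
          + 4 * ((∑ x, W x * Y x) * ∑ y, W' y * Y' y ^ 3)
          + (∑ x, W x) * ∑ y, W' y * Y' y ^ 4 := by
        simp only [Finset.sum_mul_sum]
        simp only [Finset.mul_sum, ← Finset.sum_add_distrib]
        exact Finset.sum_congr rfl fun x _ => Finset.sum_congr rfl fun y _ => by ring
    _ = _ := by
        rw [hW, hW', hY, hY']
        ring

variable {ι : Type*} [Fintype ι] {p f : ι → ℝ}

theorem sum_iidWeight_succ_mul (p f : ι → ℝ) (F : ℝ → ℝ) (n : ℕ) :
    ∑ x, iidWeight p (n + 1) x * F (∑ k, f (x k)) =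
      ∑ i, ∑ x, p i * iidWeight p n x * F (f i + ∑ k, f (x k)) := by
  rw [← (Fin.consEquiv fun _ : Fin (n + 1) => ι).sum_comp, Fintype.sum_prod_type]
  simp [iidWeight, Fin.consEquiv, Fin.prod_univ_succ, Fin.sum_univ_succ]

theorem sum_iidWeight (hp : ∑ i, p i = 1) (n : ℕ) : ∑ x, iidWeight p n x = 1 := by
  simp only [iidWeight, ← Fintype.prod_sum, hp, Finset.prod_const_one]

theorem iidWeight_mem_stdSimplex (hp : p ∈ stdSimplex ℝ ι) (n : ℕ) :
    iidWeight p n ∈ stdSimplex ℝ (Fin n → ι) :=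
  ⟨fun x => Finset.prod_nonneg fun k _ => hp.1 (x k), sum_iidWeight hp.2 n⟩

theorem sum_iidWeight_mul_sum (hp : ∑ i, p i = 1) (n : ℕ) :
    ∑ x, iidWeight p n x * ∑ k, f (x k) = n * ∑ i, p i * f i := by
  induction n with
  | zero => simp
  | succ n ih =>
    refine (sum_iidWeight_succ_mul p f id n).trans ?_
    simp only [id]
    rw [sum_mul_sum_add hp (sum_iidWeight hp n), ih]
    push_cast
    ring

theorem sum_iidWeight_mul_sum_sq (hp : ∑ i, p i = 1) (hf : ∑ i, p i * f i = 0) (n : ℕ) :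
    ∑ x, iidWeight p n x * (∑ k, f (x k)) ^ 2 = n * ∑ i, p i * f i ^ 2 := by
  induction n with
  | zero => simp
  | succ n ih =>
    rw [sum_iidWeight_succ_mul p f (· ^ 2),
      sum_mul_sum_add_sq hp (sum_iidWeight hp n) hf, ih]
    push_cast
    ring

theorem sum_iidWeight_mul_sum_pow_four (hp : ∑ i, p i = 1) (hf : ∑ i, p i * f i = 0)
    (n : ℕ) :
    ∑ x, iidWeight p n x * (∑ k, f (x k)) ^ 4 =
      n * ∑ i, p i * f i ^ 4 + 3 * n * (n - 1) * (∑ i, p i * f i ^ 2) ^ 2 := by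
  induction n with
  | zero => simp
  | succ n ih =>
    have hmean : ∑ x, iidWeight p n x * ∑ k, f (x k) = 0 := by
      rw [sum_iidWeight_mul_sum hp, hf, mul_zero]
    rw [sum_iidWeight_succ_mul p f (· ^ 4),
      sum_mul_sum_add_pow_four hp (sum_iidWeight hp n) hf hmean, ih,
      sum_iidWeight_mul_sum_sq hp hf]
    push_cast
    ring

end Moments

section Anticoncentration

variable {Ω : Type*} [Fintype Ω] {W : Ω → ℝ}

theorem prod_mem_stdSimplex (hW : W ∈ stdSimplex ℝ Ω) {Ω' : Type*} [Fintype Ω'] {W' : Ω' → ℝ}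
    (hW' : W' ∈ stdSimplex ℝ Ω') :
    (fun z : Ω × Ω' => W z.1 * W' z.2) ∈ stdSimplex ℝ (Ω × Ω') := by
  refine ⟨fun z => mul_nonneg (hW.1 _) (hW'.1 _), ?_⟩
  rw [Fintype.sum_prod_type, ← Finset.sum_mul_sum, hW.2, hW'.2, one_mul]

theorem paley_zygmund_sum (hW : W ∈ stdSimplex ℝ Ω) {Z : Ω → ℝ} {θ : ℝ} (hθ : 0 ≤ θ)
    (hle : θ ≤ ∑ x, W x * Z x) :
    (∑ x, W x * Z x - θ) ^ 2 ≤ (∑ x with θ < Z x, W x) * ∑ x, W x * Z x ^ 2 := by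
  have hsmall : ∑ x with ¬θ < Z x, W x * Z x ≤ θ := by
    calc ∑ x with ¬θ < Z x, W x * Z x
        ≤ ∑ x with ¬θ < Z x, W x * θ := Finset.sum_le_sum fun x hx =>
          mul_le_mul_of_nonneg_left (not_lt.1 (Finset.mem_filter_univ x |>.1 hx)) (hW.1 x)
      _ ≤ ∑ x, W x * θ := Finset.sum_le_univ_sum_of_nonneg fun x => mul_nonneg (hW.1 x) hθ
      _ = θ := by rw [← Finset.sum_mul, hW.2, one_mul]
  have hsplit := Finset.sum_filter_add_sum_filter_not Finset.univ (fun x => θ < Z x)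
    fun x => W x * Z x
  calc (∑ x, W x * Z x - θ) ^ 2
      ≤ (∑ x with θ < Z x, W x * Z x) ^ 2 :=
        pow_le_pow_left₀ (sub_nonneg.2 hle) (by linarith) 2
    _ ≤ (∑ x with θ < Z x, W x) * ∑ x with θ < Z x, W x * Z x ^ 2 :=
        Finset.sum_sq_le_sum_mul_sum_of_sq_le_mul _ (fun x _ => hW.1 x)
          (fun x _ => mul_nonneg (hW.1 x) (sq_nonneg _)) fun x _ => le_of_eq (by ring)
    _ ≤ (∑ x with θ < Z x, W x) * ∑ x, W x * Z x ^ 2 :=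
        mul_le_mul_of_nonneg_left
          (Finset.sum_le_univ_sum_of_nonneg fun x => mul_nonneg (hW.1 x) (sq_nonneg _))
          (Finset.sum_nonneg fun x _ => hW.1 x)

theorem sq_sum_mul_sq_le_sum_mul_pow_four (hW : W ∈ stdSimplex ℝ Ω) (Y : Ω → ℝ) :
    (∑ x, W x * Y x ^ 2) ^ 2 ≤ ∑ x, W x * Y x ^ 4 := by
  have hcs := Finset.sum_sq_le_sum_mul_sum_of_sq_le_mul Finset.univ (r := fun x => W x * Y x ^ 2)
    (g := fun x => W x * Y x ^ 4) (fun x _ => hW.1 x)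
    (fun x _ => mul_nonneg (hW.1 x) (by positivity)) fun x _ => le_of_eq (by ring)
  rwa [hW.2, one_mul] at hcs

theorem sum_mul_sub_pow_four_le (hW : W ∈ stdSimplex ℝ Ω) (Y : Ω → ℝ) (c : ℝ) :
    ∑ x, W x * (Y x - c) ^ 4 ≤ 8 * (∑ x, W x * Y x ^ 4 + c ^ 4) := by
  have hpow : ∀ y : ℝ, (y - c) ^ 4 ≤ 8 * (y ^ 4 + c ^ 4) := fun y => by
    have heven : Even 4 := by decide
    calc (y - c) ^ 4 = (y + -c) ^ 4 := by rw [sub_eq_add_neg]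
      _ ≤ 2 ^ (4 - 1) * (y ^ 4 + (-c) ^ 4) := heven.add_pow_le
      _ = 8 * (y ^ 4 + c ^ 4) := by
          rw [heven.neg_pow]
          norm_num
  calc ∑ x, W x * (Y x - c) ^ 4
      ≤ ∑ x, W x * (8 * (Y x ^ 4 + c ^ 4)) :=
        Finset.sum_le_sum fun x _ => mul_le_mul_of_nonneg_left (hpow (Y x)) (hW.1 x)
    _ = 8 * (∑ x, W x * Y x ^ 4 + c ^ 4 * ∑ x, W x) := by
        simp only [Finset.mul_sum, ← Finset.sum_add_distrib]
        exact Finset.sum_congr rfl fun x _ => by ring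
    _ = 8 * (∑ x, W x * Y x ^ 4 + c ^ 4) := by rw [hW.2, mul_one]

theorem div_le_sum_lt_abs_sub (hW : W ∈ stdSimplex ℝ Ω) {Y : Ω → ℝ} (hY : ∑ x, W x * Y x = 0)
    {V M r : ℝ} (hV : ∑ x, W x * Y x ^ 2 = V) (hVpos : 0 < V) (hM : ∑ x, W x * Y x ^ 4 ≤ M)
    (hr : r ^ 2 ≤ V / 2) (c : ℝ) :
    V ^ 2 / (32 * M) ≤ ∑ x with r < |Y x - c|, W x := by
  set q := ∑ x with r < |Y x - c|, W x
  have hVM : V ^ 2 ≤ M := hV ▸ (sq_sum_mul_sq_le_sum_mul_pow_four hW Y).trans hM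
  have hMpos : 0 < M := (pow_pos hVpos 2).trans_le hVM
  have hmass : ∑ x with V / 2 < (Y x - c) ^ 2, W x ≤ q := by
    refine Finset.sum_le_sum_of_subset_of_nonneg
      (Finset.monotone_filter_right _ fun x _ hx => ?_) fun x _ _ => hW.1 x
    exact (le_abs_self r).trans_lt (sq_lt_sq.1 (hr.trans_lt hx))
  have hfourth : ∑ x, W x * ((Y x - c) ^ 2) ^ 2 ≤ 8 * (M + c ^ 4) := by
    simp only [← pow_mul]
    linarith [sum_mul_sub_pow_four_le hW Y c]
  have hPZ : (V / 2 + c ^ 2) ^ 2 ≤ q * (8 * (M + c ^ 4)) := by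
    have hmean : ∑ x, W x * (Y x - c) ^ 2 = V + c ^ 2 := by rw [sum_mul_sub_sq hW.2 hY, hV]
    calc (V / 2 + c ^ 2) ^ 2
        = (∑ x, W x * (Y x - c) ^ 2 - V / 2) ^ 2 := by
          rw [hmean]
          ring
      _ ≤ (∑ x with V / 2 < (Y x - c) ^ 2, W x) * ∑ x, W x * ((Y x - c) ^ 2) ^ 2 :=
          paley_zygmund_sum hW (by positivity) (by rw [hmean]; nlinarith [sq_nonneg c])
      _ ≤ q * (8 * (M + c ^ 4)) := mul_le_mul hmass hfourth
          (Finset.sum_nonneg fun x _ => mul_nonneg (hW.1 x) (by positivity))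
          (Finset.sum_nonneg fun x _ => hW.1 x)
  -- Since `V ^ 2 ≤ M`, moving the centre to `c` costs no more than a constant factor.
  have hcompare : V ^ 2 * (M + c ^ 4) ≤ 4 * M * (V / 2 + c ^ 2) ^ 2 := by
    have h₁ : V ^ 2 * c ^ 4 ≤ M * c ^ 4 := by gcongr
    have h₂ : 0 ≤ M * V * c ^ 2 := by positivity
    have h₃ : 0 ≤ M * c ^ 4 := by positivity
    linarith
  rw [div_le_iff₀ (by positivity)]
  refine le_of_mul_le_mul_right ?_ (by positivity : 0 < M + c ^ 4)
  linarith [mul_le_mul_of_nonneg_left hPZ hMpos.le]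

variable {ι : Type*} [Fintype ι] {p : ι → ℝ}

theorem div_le_sum_iidWeight_lt_abs_sub (hp : p ∈ stdSimplex ℝ ι) {f : ι → ℝ} {v m r : ℝ}
    (hf : ∑ i, p i * f i = 0) (hv : ∑ i, p i * f i ^ 2 = v) (hvpos : 0 < v)
    (hm : ∑ i, p i * f i ^ 4 = m) {n : ℕ} (hn : 0 < n) (hr : r ^ 2 ≤ n * v / 2) (c : ℝ) :
    v ^ 2 / (32 * (3 * v ^ 2 + m)) ≤ ∑ x with r < |∑ k, f (x k) - c|, iidWeight p n x := by
  have hn' : (1 : ℝ) ≤ n := Nat.one_le_cast.2 hn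
  have hm₀ : 0 ≤ m := hm ▸ Finset.sum_nonneg fun i _ => mul_nonneg (hp.1 i) (by positivity)
  have hmean : ∑ x, iidWeight p n x * ∑ k, f (x k) = 0 := by
    rw [sum_iidWeight_mul_sum hp.2, hf, mul_zero]
  have hsecond : ∑ x, iidWeight p n x * (∑ k, f (x k)) ^ 2 = n * v := by
    rw [sum_iidWeight_mul_sum_sq hp.2 hf, hv]
  have hfourth : ∑ x, iidWeight p n x * (∑ k, f (x k)) ^ 4 ≤ (3 * v ^ 2 + m) * n ^ 2 := by
    rw [sum_iidWeight_mul_sum_pow_four hp.2 hf, hv, hm]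
    have h₁ : 0 ≤ m * n * (n - 1) := mul_nonneg (by positivity) (sub_nonneg.2 hn')
    have h₂ : 0 ≤ n * v ^ 2 := by positivity
    linarith
  calc v ^ 2 / (32 * (3 * v ^ 2 + m))
      = (n * v) ^ 2 / (32 * ((3 * v ^ 2 + m) * n ^ 2)) := by field_simp
    _ ≤ _ := div_le_sum_lt_abs_sub (iidWeight_mem_stdSimplex hp n) hmean hsecond (by positivity)
        hfourth hr c

theorem abs_logb_sub_le {B a b y r : ℝ} (hB : 1 < B) (ha : 0 < a) (hy : y ∈ Set.Icc a b)
    (hab : b ≤ B ^ (2 * r) * a) : |Real.logb B y - (Real.logb B a + r)| ≤ r := by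
  have hBpos : 0 < B := one_pos.trans hB
  have hypos : 0 < y := ha.trans_le hy.1
  have hlower : Real.logb B a ≤ Real.logb B y := Real.logb_le_logb_of_le hB ha hy.1
  have hupper : Real.logb B y ≤ 2 * r + Real.logb B a := by
    calc Real.logb B y
        ≤ Real.logb B (B ^ (2 * r) * a) :=
          Real.logb_le_logb_of_le hB hypos (hy.2.trans hab)
      _ = 2 * r + Real.logb B a := by
          rw [Real.logb_mul (by positivity) ha.ne', Real.logb_rpow hBpos hB.ne']
  exact abs_le.2 ⟨by linarith, by linarith⟩

theorem exists_isSpread_iidWeight (hp : p ∈ stdSimplex ℝ ι) {E α : ℝ}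
    (hE : E = -∑ i, p i * Real.logb 2 (p i))
    (hα : α = Real.sqrt (∑ i, p i * (Real.logb 2 (p i) + E) ^ 2)) (hαpos : 0 < α) :
    ∃ η > 0, ∀ n : ℕ, 0 < n → IsSpread (iidWeight p n) (2 ^ (α * Real.sqrt n)) η := by
  set f : ι → ℝ := fun i => Real.logb 2 (p i) + E
  set m := ∑ i, p i * f i ^ 4 with hm
  have hm₀ : 0 ≤ m := Finset.sum_nonneg fun i _ => mul_nonneg (hp.1 i) (by positivity)
  have hmean : ∑ i, p i * f i = 0 := by
    simp only [f, mul_add, Finset.sum_add_distrib, ← Finset.sum_mul, hp.2, hE]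
    ring
  have hvar : ∑ i, p i * f i ^ 2 = α ^ 2 := by
    rw [hα, Real.sq_sqrt (Finset.sum_nonneg fun i _ => mul_nonneg (hp.1 i) (sq_nonneg _))]
  refine ⟨(α ^ 2) ^ 2 / (32 * (3 * (α ^ 2) ^ 2 + m)), by positivity, fun n hn a b ha hab => ?_⟩
  set r := α * Real.sqrt n / 2 with hr
  have hrsq : r ^ 2 ≤ n * α ^ 2 / 2 := by
    rw [hr, div_pow, mul_pow, Real.sq_sqrt n.cast_nonneg]
    linarith [show 0 ≤ n * α ^ 2 by positivity]
  have hab' : b ≤ 2 ^ (2 * r) * a := by rwa [hr, mul_div_cancel₀ _ two_ne_zero]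
  refine (div_le_sum_iidWeight_lt_abs_sub hp hmean hvar (by positivity) hm.symm hn hrsq
    (Real.logb 2 a + r + n * E)).trans ?_
  refine Finset.sum_le_sum_of_subset_of_nonneg
    (Finset.monotone_filter_right _ fun x _ hx hmem => ?_)
    fun x _ _ => (iidWeight_mem_stdSimplex hp n).1 x
  have hlog : ∑ k, f (x k) = Real.logb 2 (iidWeight p n x) + n * E := by
    have hne : iidWeight p n x ≠ 0 := (ha.trans_le hmem.1).ne'
    rw [iidWeight, Real.logb_prod _ _ fun k hk => Finset.prod_ne_zero_iff.1 hne k hk]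
    simp [f, Finset.sum_add_distrib]
  rw [hlog, add_sub_add_right_eq_sub] at hx
  exact hx.not_ge (abs_logb_sub_le one_lt_two ha hmem hab')

theorem IsSpread.prod {R η : ℝ} (hW : IsSpread W R η) {Ω' : Type*} [Fintype Ω'] {g : Ω' → ℝ}
    (hg : g ∈ stdSimplex ℝ Ω') : IsSpread (fun z : Ω × Ω' => W z.1 * g z.2) R η := by
  intro a b ha hab
  have hslice : ∀ y, g y * η ≤ ∑ x, if W x * g y ∉ Set.Icc a b then W x * g y else 0 := by
    intro y
    rcases (hg.1 y).eq_or_lt with hy | hy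
    · simp [← hy]
    have hscaled : η ≤ offMass W (a / g y) (b / g y) :=
      hW (div_pos ha hy) (by rw [← mul_div_assoc]; gcongr)
    calc g y * η ≤ g y * offMass W (a / g y) (b / g y) :=
          mul_le_mul_of_nonneg_left hscaled hy.le
      _ = _ := by
          rw [offMass, Finset.sum_filter, Finset.mul_sum]
          simp only [Set.mem_Icc, div_le_iff₀ hy, le_div_iff₀ hy, mul_ite, mul_zero,
            mul_comm (W _)]
  calc η = ∑ y, g y * η := by rw [← Finset.sum_mul, hg.2, one_mul]
    _ ≤ ∑ y, ∑ x, if W x * g y ∉ Set.Icc a b then W x * g y else 0 :=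
        Finset.sum_le_sum fun y _ => hslice y
    _ = offMass (fun z : Ω × Ω' => W z.1 * g z.2) a b := by
        rw [offMass, Finset.sum_filter, Fintype.sum_prod_type_right]

end Anticoncentration

theorem eventually_rpow_half_mul_sqrt_le {B α c : ℝ} (hB : 1 < B) (hα : 0 < α) (hc : 0 < c) :
    ∀ᶠ n : ℕ in Filter.atTop,
      B ^ (α / 2 * Real.sqrt n) ≤ B ^ (α * Real.sqrt n) * c := by
  have hBpos : 0 < B := one_pos.trans hB
  have htendsto : Filter.Tendsto (fun n : ℕ => B ^ (α / 2 * Real.sqrt n)) Filter.atTop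
      Filter.atTop :=
    (tendsto_rpow_atTop_of_base_gt_one B hB).comp <|
      (Real.tendsto_sqrt_atTop.comp tendsto_natCast_atTop_atTop).const_mul_atTop (half_pos hα)
  filter_upwards [htendsto.eventually_ge_atTop c⁻¹] with n hn
  calc B ^ (α / 2 * Real.sqrt n)
      = B ^ (α / 2 * Real.sqrt n) * (c⁻¹ * c) := by rw [inv_mul_cancel₀ hc.ne', mul_one]
    _ ≤ B ^ (α / 2 * Real.sqrt n) * (B ^ (α / 2 * Real.sqrt n) * c) := by gcongr
    _ = B ^ (α * Real.sqrt n) * c := by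
        rw [← mul_assoc, ← Real.rpow_add hBpos, ← add_mul, add_halves]

theorem communication_lower_bound_core_general {ι : Type*} [Fintype ι] [DecidableEq ι]
    (ρ : Matrix ι ι ℂ) (hρ : IsDensity ρ) (E α : ℝ)
    (hE : E = -∑ i, hρ.1.isHermitian.eigenvalues i *
        Real.logb 2 (hρ.1.isHermitian.eigenvalues i))
    (hα : α = Real.sqrt (∑ i, hρ.1.isHermitian.eigenvalues i *
        (Real.logb 2 (hρ.1.isHermitian.eigenvalues i) + E) ^ 2))
    (hαpos : 0 < α) :
    ∃ ε₀ α' : ℝ, ∃ n₀ : ℕ, 0 < ε₀ ∧ 0 < α' ∧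
      ∀ n : ℕ, n₀ ≤ n →
      ∀ (κ : Type*) [Fintype κ] [DecidableEq κ],
      ∀ Γ : Matrix κ κ ℂ, IsDensity Γ →
      ∀ d : ℕ, 0 < d →
      ∀ t : ℝ, 0 < t →
      ∀ X : Matrix ((Fin n → ι) × κ) ((Fin n → ι) × κ) ℂ, X.IsHermitian → X.trace = 1 →
        X.rank ≤ d →
        opNorm X ≤ t / d →
        traceDist (Matrix.kroneckerMap (· * ·) (kronPow ρ n) Γ) X ≤ 2 * ε₀ →
        (2 : ℝ) ^ (α' * Real.sqrt n) ≤ t := by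
  have hp := hρ.eigenvalues_mem_stdSimplex
  obtain ⟨η, hη, hspread⟩ := exists_isSpread_iidWeight hp hE hα hαpos
  have hε : 0 < η / 12 := by positivity
  obtain ⟨n₀, hn₀⟩ := Filter.eventually_atTop.1 <|
    (eventually_rpow_half_mul_sqrt_le one_lt_two hαpos (pow_pos hε 2)).and
      (Filter.eventually_gt_atTop 0)
  refine ⟨η / 12, α / 2, n₀, hε, half_pos hαpos, ?_⟩
  intro n hn κ _ _ Γ hΓ d hd t ht X hX htr hrank hnorm hdist
  obtain ⟨hrpow, hnpos⟩ := hn₀ n hn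
  have hg := hΓ.eigenvalues_mem_stdSimplex
  rw [← spectralHom_eigenvalues hρ.1.isHermitian, ← spectralHom_eigenvalues hΓ.1.isHermitian,
    kronPow_spectralHom, kronecker_spectralHom] at hdist
  exact hrpow.trans <| le_of_lt <| ((hspread n hnpos).prod hg).lt_of_traceDist_le
    (prod_mem_stdSimplex (iidWeight_mem_stdSimplex hp n) hg) hε (by linarith) hX htr hd ht hrank
    hnorm hdist

/-- core of the communication lower bound: there are `ε₀ > 0`, `α' > 0`, `n₀`
such that for `n ≥ n₀`, any density matrix `X` of rank `≤ d` and operator norm `≤ t/d` that is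
within trace distance `2ε₀` of `ρ^{⊗n} ⊗ Γ` forces `t ≥ 2^{α'√n}`. -/
theorem communication_lower_bound_core {ι : Type*} [Fintype ι] [DecidableEq ι] [Nonempty ι]
    (ρ : Matrix ι ι ℂ) (hρ : IsDensity ρ)
    (E α β : ℝ)
    (hE : E = -∑ i, hρ.1.isHermitian.eigenvalues i *
        Real.logb 2 (hρ.1.isHermitian.eigenvalues i))
    (hα : α = Real.sqrt (∑ i, hρ.1.isHermitian.eigenvalues i *
        (Real.logb 2 (hρ.1.isHermitian.eigenvalues i) + E) ^ 2))
    (hβ : β = ∑ i, hρ.1.isHermitian.eigenvalues i *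
        |Real.logb 2 (hρ.1.isHermitian.eigenvalues i) + E| ^ 3)
    (hαpos : 0 < α) :
    ∃ ε₀ α' : ℝ, ∃ n₀ : ℕ, 0 < ε₀ ∧ 0 < α' ∧
      ∀ n : ℕ, n₀ ≤ n →
      ∀ (κ : Type) [Fintype κ] [DecidableEq κ] [Nonempty κ],
      ∀ Γ : Matrix κ κ ℂ, IsDensity Γ →
      ∀ d : ℕ, 0 < d →
      ∀ t : ℝ, 0 < t →
      ∀ X : Matrix ((Fin n → ι) × κ) ((Fin n → ι) × κ) ℂ, IsDensity X →
        X.rank ≤ d →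
        opNorm X ≤ t / d →
        traceDist (Matrix.kroneckerMap (· * ·) (kronPow ρ n) Γ) X ≤ 2 * ε₀ →
        (2 : ℝ) ^ (α' * Real.sqrt n) ≤ t := by
  obtain ⟨ε₀, α', n₀, hε₀, hα', hbound⟩ :=
    communication_lower_bound_core_general ρ hρ E α hE hα hαpos
  exact ⟨ε₀, α', n₀, hε₀, hα', fun n hn κ _ _ _ Γ hΓ d hd t ht X hX =>
    hbound n hn κ Γ hΓ d hd t ht X hX.1.isHermitian hX.2⟩
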